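/- Proposition 3.5 (3-reflective billiards on lines are right-spherical). Let (a₁,v₁), (a₂,v₂), (a₃,v₃) be a 3-reflective triple of complex analytic line-framed curves in ℂ² such that each image aᵢ(Uᵢ) is contained in a complex affine line ℓᵢ, and the three lines ℓ₁, ℓ₂, ℓ₃ are pairwise distinct. Then the triple is right-spherical: there exist linearly independent vectors p, q, r ∈ ℂ³ such that for every s ∈ U₁, (a₁(s),1) ∈ span{p,q} and r ∈ span{(a₁(s),1),(v₁(s),0)}; for every u ∈ U₂, (a₂(u),1) ∈ span{q,r} and p ∈ span{(a₂(u),1),(v₂(u),0)}; and for every t ∈ U₃, (a₃(t),1) ∈ span{r,p} and q ∈ span{(a₃(t),1),(v₃(t),0)}. In particular the three lines are not concurrent in the projective plane. -/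

import Mathlib

/-- Two nonzero vectors `u`, `w` of the plane are symmetric with respect to the pair
`(v, τ)` (field direction, tangent direction): there are nonzero scalars `p`, `q` with
`p • u + q • w` on the line spanned by `τ` and `p • u - q • w` on the line spanned by `v`. -/
def PlaneSym (𝕜 : Type*) [Field 𝕜] (v τ u w : 𝕜 × 𝕜) : Prop :=
  ∃ p q : 𝕜, p ≠ 0 ∧ q ≠ 0 ∧ p • u + q • w ∈ Submodule.span 𝕜 {τ} ∧
    p • u - q • w ∈ Submodule.span 𝕜 {v}

/-- Lift of a point of the plane to homogeneous coordinates: `x ↦ (x, 1)`. -/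
def liftPt (𝕜 : Type*) [Field 𝕜] (x : 𝕜 × 𝕜) : 𝕜 × 𝕜 × 𝕜 := (x.1, x.2, 1)

/-- Lift of a direction of the plane to homogeneous coordinates: `x ↦ (x, 0)`. -/
def liftDir (𝕜 : Type*) [Field 𝕜] (x : 𝕜 × 𝕜) : 𝕜 × 𝕜 × 𝕜 := (x.1, x.2, 0)

/-- The affine line through `x` with direction `w`. -/
def lineThru (𝕜 : Type*) [Field 𝕜] (x w : 𝕜 × 𝕜) : Set (𝕜 × 𝕜) :=
  {y | ∃ c : 𝕜, y = x + c • w}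

/-- Bilinear pairing on `ℂ³`. -/
def dt (n X : ℂ × ℂ × ℂ) : ℂ := n.1 * X.1 + n.2.1 * X.2.1 + n.2.2 * X.2.2

/-- Cross product on `ℂ³`. -/
def cr (a b : ℂ × ℂ × ℂ) : ℂ × ℂ × ℂ :=
  (a.2.1 * b.2.2 - a.2.2 * b.2.1, a.2.2 * b.1 - a.1 * b.2.2, a.1 * b.2.1 - a.2.1 * b.1)

/-- Determinant of two plane vectors. -/
def br (u w : ℂ × ℂ) : ℂ := u.1 * w.2 - u.2 * w.1

lemma br_eq_zero {v u : ℂ × ℂ} (hv : v ≠ 0) (h : br v u = 0) : ∃ c : ℂ, u = c • v := by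
  obtain ⟨v1, v2⟩ := v
  obtain ⟨u1, u2⟩ := u
  simp only [br] at h
  by_cases h1 : v1 = 0
  · have h2 : v2 ≠ 0 := by
      rintro rfl
      exact hv (by simp [h1])
    refine ⟨u2 / v2, ?_⟩
    subst h1
    have : u1 = 0 := by
      have : v2 * u1 = 0 := by linear_combination -h
      exact (mul_eq_zero.1 this).resolve_left h2
    ext <;> simp [this, h2]
  · refine ⟨u1 / v1, ?_⟩
    ext
    · simp [h1]
    · simp only [Prod.smul_mk, smul_eq_mul]
      field_simp
      linear_combination h

lemma dt_expand (n1 n2 n3 f X : ℂ × ℂ × ℂ) :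
    dt f X * dt n1 (cr n2 n3) = dt n1 X * dt f (cr n2 n3) + dt n2 X * dt f (cr n3 n1)
      + dt n3 X * dt f (cr n1 n2) := by
  simp only [dt, cr]; ring

lemma dt_cyc (n1 n2 n3 : ℂ × ℂ × ℂ) : dt n2 (cr n3 n1) = dt n1 (cr n2 n3) := by
  simp only [dt, cr]; ring

lemma dt_sub (f n X : ℂ × ℂ × ℂ) : dt (f - n) X = dt f X - dt n X := by
  simp only [dt, Prod.fst_sub, Prod.snd_sub]; ring

lemma dt_smul (c : ℂ) (n X : ℂ × ℂ × ℂ) : dt (c • n) X = c * dt n X := by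
  simp only [dt, Prod.smul_fst, Prod.smul_snd, smul_eq_mul]; ring

lemma eq_zero_of_dt {f : ℂ × ℂ × ℂ} (h : ∀ X, dt f X = 0) : f = 0 := by
  have h1 := h (1, 0, 0)
  have h2 := h (0, 1, 0)
  have h3 := h (0, 0, 1)
  simp [dt] at h1 h2 h3
  ext <;> simp [*]

lemma eq_zero_of_basis {n1 n2 n3 f : ℂ × ℂ × ℂ} (hD : dt n1 (cr n2 n3) ≠ 0)
    (h1 : dt f (cr n2 n3) = 0) (h2 : dt f (cr n3 n1) = 0) (h3 : dt f (cr n1 n2) = 0) :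
    f = 0 := by
  apply eq_zero_of_dt
  intro X
  have := dt_expand n1 n2 n3 f X
  rw [h1, h2, h3] at this
  simpa [hD] using this

lemma pt_eq {n1 n2 n3 X Y : ℂ × ℂ × ℂ} (hD : dt n1 (cr n2 n3) ≠ 0) (c : ℂ)
    (h1 : dt n1 X = c * dt n1 Y) (h2 : dt n2 X = c * dt n2 Y) (h3 : dt n3 X = c * dt n3 Y) :
    X = c • Y := by
  have key : ∀ f, dt f X = c * dt f Y := by
    intro f
    have e1 := dt_expand n1 n2 n3 f X
    have e2 := dt_expand n1 n2 n3 f Y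
    apply mul_right_cancel₀ hD
    rw [e1, h1, h2, h3]
    linear_combination -c * e2
  have k1 := key (1, 0, 0)
  have k2 := key (0, 1, 0)
  have k3 := key (0, 0, 1)
  simp [dt] at k1 k2 k3
  ext <;> simp [*]

lemma liftPt_inj {x y : ℂ × ℂ} {c : ℂ} (h : liftPt ℂ x = c • liftPt ℂ y) : x = y := by
  have h3 := congrArg (fun p => p.2.2) h
  have h1 := congrArg (fun p => p.1) h
  have h2 := congrArg (fun p => p.2.1) h
  simp [liftPt] at h1 h2 h3
  subst h3
  ext <;> simp [*]

/-- Pointwise law at a vertex, triangle case. -/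
lemma tri_law {n1 n2 n3 A B C f : ℂ × ℂ × ℂ} (hD : dt n1 (cr n2 n3) ≠ 0)
    (hA : dt n1 A = 0) (hA2 : dt n2 A ≠ 0)
    (hB : dt n2 B = 0) (hB1 : dt n1 B ≠ 0)
    (hC : dt n3 C = 0) (hC1 : dt n1 C ≠ 0)
    (hf : f ≠ 0) (hfA : dt f A = 0)
    (hl : dt n1 B * dt f C + dt n1 C * dt f B = 0) :
    dt f (cr n1 n2) ≠ 0 ∧ dt n3 B / dt n1 B - dt n3 A / dt n2 A * (dt n2 C / dt n1 C)
      = -2 * dt f (cr n2 n3) / dt f (cr n1 n2) := by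
  have eA := dt_expand n1 n2 n3 f A
  have eB := dt_expand n1 n2 n3 f B
  have eC := dt_expand n1 n2 n3 f C
  rw [hA, hfA] at eA
  rw [hB] at eB
  rw [hC] at eC
  have key : dt n1 B * (dt n1 C * dt f (cr n2 n3) + dt n2 C * dt f (cr n3 n1))
      + dt n1 C * (dt n1 B * dt f (cr n2 n3) + dt n3 B * dt f (cr n1 n2)) = 0 := by
    linear_combination dt n1 (cr n2 n3) * hl - dt n1 B * eC - dt n1 C * eB
  have hQ : dt f (cr n1 n2) ≠ 0 := by
    intro h0
    have hP : dt f (cr n3 n1) = 0 := by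
      rw [h0] at eA
      simpa [hA2] using eA.symm
    rw [h0, hP] at key
    have : dt n1 B * dt n1 C * dt f (cr n2 n3) = 0 := by linear_combination key / 2
    have hR : dt f (cr n2 n3) = 0 := by simpa [hB1, hC1] using this
    exact hf (eq_zero_of_basis hD hR hP h0)
  refine ⟨hQ, ?_⟩
  field_simp
  linear_combination dt n2 A * key + dt n1 B * dt n2 C * eA

lemma conc_A {n1 n2 m A B C f : ℂ × ℂ × ℂ} (hD : dt n1 (cr n2 m) ≠ 0)
    (hA : dt n1 A = 0) (hA2 : dt n2 A ≠ 0)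
    (hB : dt n2 B = 0) (hB1 : dt n1 B ≠ 0) (hC1 : dt n1 C ≠ 0)
    (hf : f ≠ 0) (hfA : dt f A = 0)
    (hl : dt n1 B * dt f C + dt n1 C * dt f B = 0) :
    dt m C / dt n1 C + dt m B / dt n1 B =
      -2 * dt f (cr n2 m) / dt f (cr n1 n2) + dt n2 C / dt n1 C * (dt m A / dt n2 A) := by
  have eA := dt_expand n1 n2 m f A
  have eB := dt_expand n1 n2 m f B
  have eC := dt_expand n1 n2 m f C
  rw [hA, hfA] at eA
  rw [hB] at eB
  set F1 := dt f (cr n2 m) with hF1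
  set F2 := dt f (cr m n1) with hF2
  set F3 := dt f (cr n1 n2) with hF3
  have key : dt n1 B * (dt n1 C * F1 + dt n2 C * F2 + dt m C * F3)
      + dt n1 C * (dt n1 B * F1 + dt m B * F3) = 0 := by
    linear_combination dt n1 (cr n2 m) * hl - dt n1 B * eC - dt n1 C * eB
  have hQ : F3 ≠ 0 := by
    intro h0
    have hP : F2 = 0 := by
      rw [h0] at eA
      simpa [hA2] using eA.symm
    rw [h0, hP] at key
    have : dt n1 B * dt n1 C * F1 = 0 := by linear_combination key / 2
    have hR : F1 = 0 := by simpa [hB1, hC1] using this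
    exact hf (eq_zero_of_basis hD hR hP h0)
  field_simp
  linear_combination dt n2 A * key + dt n1 B * dt n2 C * eA

lemma conc_B {n1 n2 m A B C f : ℂ × ℂ × ℂ} (hD : dt n1 (cr n2 m) ≠ 0)
    (hA : dt n1 A = 0) (hA2 : dt n2 A ≠ 0)
    (hB : dt n2 B = 0) (hB1 : dt n1 B ≠ 0) (hC1 : dt n1 C ≠ 0) (hC2 : dt n2 C ≠ 0)
    (hf : f ≠ 0) (hfB : dt f B = 0)
    (hl : dt n2 A * dt f C + dt n2 C * dt f A = 0) :
    dt m C / dt n1 C + dt n2 C / dt n1 C * (dt m A / dt n2 A) =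
      -2 * (dt n2 C / dt n1 C) * dt f (cr m n1) / dt f (cr n1 n2) + dt m B / dt n1 B := by
  have eA := dt_expand n1 n2 m f A
  have eB := dt_expand n1 n2 m f B
  have eC := dt_expand n1 n2 m f C
  rw [hA] at eA
  rw [hB, hfB] at eB
  set F1 := dt f (cr n2 m) with hF1
  set F2 := dt f (cr m n1) with hF2
  set F3 := dt f (cr n1 n2) with hF3
  have key : dt n2 A * (dt n1 C * F1 + dt n2 C * F2 + dt m C * F3)
      + dt n2 C * (dt n2 A * F2 + dt m A * F3) = 0 := by
    linear_combination dt n1 (cr n2 m) * hl - dt n2 A * eC - dt n2 C * eA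
  have hQ : F3 ≠ 0 := by
    intro h0
    have hP : F1 = 0 := by
      rw [h0] at eB
      simpa [hB1] using eB.symm
    rw [h0, hP] at key
    have : dt n2 A * dt n2 C * F2 = 0 := by linear_combination key / 2
    have hR : F2 = 0 := by simpa [hA2, hC2] using this
    exact hf (eq_zero_of_basis hD hP hR h0)
  field_simp
  linear_combination dt n1 B * key + dt n2 A * dt n1 C * eB

lemma conc_C {n1 n2 n3 m A B C f : ℂ × ℂ × ℂ} {α β : ℂ} (hD : dt n1 (cr n2 m) ≠ 0)
    (hn3 : ∀ X, dt n3 X = α * dt n1 X + β * dt n2 X)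
    (hα : α ≠ 0) (hβ : β ≠ 0)
    (hA : dt n1 A = 0) (hA2 : dt n2 A ≠ 0)
    (hB : dt n2 B = 0) (hB1 : dt n1 B ≠ 0) (hC1 : dt n1 C ≠ 0)
    (hC : dt n3 C = 0)
    (hf : f ≠ 0) (hfC : dt f C = 0)
    (hl : dt n3 A * dt f B + dt n3 B * dt f A = 0) :
    dt m B / dt n1 B + α / β * (dt m A / dt n2 A) =
      - (dt f (cr n2 m) + α / β * dt f (cr m n1)) / dt f (cr n1 n2) := by
  have eA := dt_expand n1 n2 m f A
  have eB := dt_expand n1 n2 m f B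
  have eC := dt_expand n1 n2 m f C
  rw [hA] at eA
  rw [hB] at eB
  rw [hfC] at eC
  rw [hn3] at hC
  rw [hn3, hn3, hA, hB] at hl
  set F1 := dt f (cr n2 m) with hF1
  set F2 := dt f (cr m n1) with hF2
  set F3 := dt f (cr n1 n2) with hF3
  have key : β * dt n2 A * (dt n1 B * F1 + dt m B * F3)
      + α * dt n1 B * (dt n2 A * F2 + dt m A * F3) = 0 := by
    linear_combination dt n1 (cr n2 m) * hl - β * dt n2 A * eB - α * dt n1 B * eA
  have hQ : F3 ≠ 0 := by
    intro h0
    rw [h0] at key eC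
    have h1 : dt n2 A * dt n1 B * (β * F1 + α * F2) = 0 := by linear_combination key
    have h1' : β * F1 + α * F2 = 0 := by simpa [hA2, hB1] using h1
    have h2 : dt n1 C * (β * F1 - α * F2) = 0 := by linear_combination -F2 * hC - β * eC
    have h2' : β * F1 - α * F2 = 0 := by simpa [hC1] using h2
    have hP : β * F1 = 0 := by linear_combination (h1' + h2') / 2
    have hR : α * F2 = 0 := by linear_combination (h1' - h2') / 2
    exact hf (eq_zero_of_basis hD (by simpa [hβ] using hP) (by simpa [hα] using hR) h0)
  field_simp
  linear_combination key

lemma tri_alg {x1 x2 y1 y2 m1 m2 k1 k2 : ℂ} (hx1 : x1 ≠ 0) (hx2 : x2 ≠ 0)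
    (hy1 : y1 ≠ 0) (hy2 : y2 ≠ 0) (hx : x1 ≠ x2) (hy : y1 ≠ y2)
    (n21 : 1 - y1 * m2 ≠ 0)
    (h11 : k1 * (1 - y1 * m1) = x1 * y1 ^ 2 * m1)
    (h12 : k2 * (1 - y2 * m1) = x1 * y2 ^ 2 * m1)
    (h21 : k1 * (1 - y1 * m2) = x2 * y1 ^ 2 * m2)
    (h22 : k2 * (1 - y2 * m2) = x2 * y2 ^ 2 * m2) : m1 = 0 := by
  by_contra hm1
  have hk1 : k1 ≠ 0 := by
    rintro rfl
    rw [zero_mul] at h11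
    have := h11.symm
    simp [hx1, hy1, hm1] at this
  have hk2 : k2 ≠ 0 := by
    rintro rfl
    rw [zero_mul] at h12
    have := h12.symm
    simp [hx1, hy2, hm1] at this
  have hm2 : m2 ≠ 0 := by
    rintro rfl
    simp [hk1] at h21
  have e : ∀ x y m k : ℂ, x ≠ 0 → m ≠ 0 → k ≠ 0 → k * (1 - y * m) = x * y ^ 2 * m →
      y ^ 2 / k = 1 / (x * m) - y / x := by
    intro x y m k hx hm hk h
    field_simp
    linear_combination -h
  have a := e _ _ _ _ hx1 hm1 hk1 h11
  have b := e _ _ _ _ hx1 hm1 hk2 h12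
  have c := e _ _ _ _ hx2 hm2 hk1 h21
  have d := e _ _ _ _ hx2 hm2 hk2 h22
  have : (y1 - y2) * (1 / x1 - 1 / x2) = 0 := by linear_combination a - b - c + d
  rcases mul_eq_zero.1 this with h | h
  · exact hy (sub_eq_zero.1 h)
  · apply hx
    field_simp at h
    linear_combination -h

lemma mem_span_of_dt {a v : ℂ × ℂ} {R : ℂ × ℂ × ℂ} (hv : v ≠ 0)
    (h : dt (cr (liftPt ℂ a) (liftDir ℂ v)) R = 0) :
    R ∈ Submodule.span ℂ {liftPt ℂ a, liftDir ℂ v} := by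
  obtain ⟨r1, r2, r3⟩ := R
  have : br v (r1 - r3 * a.1, r2 - r3 * a.2) = 0 := by
    simp [dt, cr, liftPt, liftDir] at h
    simp only [br]
    linear_combination h
  obtain ⟨c, hc⟩ := br_eq_zero hv this
  rw [Submodule.mem_span_pair]
  refine ⟨r3, c, ?_⟩
  have h1 := congrArg Prod.fst hc
  have h2 := congrArg Prod.snd hc
  simp at h1 h2
  ext <;> simp [liftPt, liftDir, ← h1, ← h2]

lemma mem_span_edge {n1 n2 n3 A : ℂ × ℂ × ℂ} (hD : dt n1 (cr n2 n3) ≠ 0)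
    (hA : dt n1 A = 0) : A ∈ Submodule.span ℂ {cr n3 n1, cr n1 n2} := by
  rw [Submodule.mem_span_pair]
  refine ⟨dt n2 A / dt n1 (cr n2 n3), dt n3 A / dt n1 (cr n2 n3), ?_⟩
  have key : ∀ f, dt f (cr n3 n1) * (dt n2 A / dt n1 (cr n2 n3)) +
      dt f (cr n1 n2) * (dt n3 A / dt n1 (cr n2 n3)) = dt f A := by
    intro f
    have := dt_expand n1 n2 n3 f A
    rw [hA] at this
    field_simp
    linear_combination -this
  have k1 := key (1, 0, 0)
  have k2 := key (0, 1, 0)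
  have k3 := key (0, 0, 1)
  simp only [dt, one_mul, zero_mul, zero_add, add_zero] at k1 k2 k3
  ext
  · simp [dt]; linear_combination k1
  · simp [dt]; linear_combination k2
  · simp [dt]; linear_combination k3

lemma law_of_sym {v τ w0 u w : ℂ × ℂ} {c : ℂ} (hτ : τ = c • w0)
    (h : PlaneSym ℂ v τ u w) : br w0 u * br v w + br w0 w * br v u = 0 := by
  obtain ⟨p, q, hp, hq, h1, h2⟩ := h
  rw [Submodule.mem_span_singleton] at h1 h2
  obtain ⟨d, hd⟩ := h1
  obtain ⟨e, he⟩ := h2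
  rw [hτ] at hd
  have d1 := congrArg Prod.fst hd
  have d2 := congrArg Prod.snd hd
  have e1 := congrArg Prod.fst he
  have e2 := congrArg Prod.snd he
  simp at d1 d2 e1 e2
  have k1 : p * br w0 u + q * br w0 w = 0 := by
    simp only [br]; linear_combination w0.2 * d1 - w0.1 * d2
  have k2 : p * br v u - q * br v w = 0 := by
    simp only [br]; linear_combination v.2 * e1 - v.1 * e2
  apply mul_left_cancel₀ hp
  linear_combination br v w * k1 + br w0 w * k2

lemma deriv_line {U : Set ℂ} {a : ℂ → ℂ × ℂ} {x w : ℂ × ℂ} (hU : IsOpen U)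
    (ha : AnalyticOnNhd ℂ a U) (hw : w ≠ 0) (hl : ∀ s ∈ U, a s ∈ lineThru ℂ x w)
    {s : ℂ} (hs : s ∈ U) : ∃ c : ℂ, deriv a s = c • w := by
  apply br_eq_zero hw
  have h1 := (ha s hs).differentiableAt.hasDerivAt
  have hL : HasFDerivAt (fun p : ℂ × ℂ => w.1 * p.2 - w.2 * p.1)
      (w.1 • ContinuousLinearMap.snd ℂ ℂ ℂ - w.2 • ContinuousLinearMap.fst ℂ ℂ ℂ) (a s) :=
    (w.1 • ContinuousLinearMap.snd ℂ ℂ ℂ - w.2 • ContinuousLinearMap.fst ℂ ℂ ℂ).hasFDerivAt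
  have h2 : HasDerivAt (fun t => w.1 * (a t).2 - w.2 * (a t).1)
      (w.1 * (deriv a s).2 - w.2 * (deriv a s).1) s := hL.comp_hasDerivAt s h1
  have h3 : (fun t => w.1 * (a t).2 - w.2 * (a t).1) =ᶠ[nhds s]
      fun _ => w.1 * x.2 - w.2 * x.1 := by
    filter_upwards [hU.mem_nhds hs] with t ht
    obtain ⟨c, hc⟩ := hl t ht
    rw [hc]
    simp
    ring
  have h4 := h3.deriv_eq
  rw [h2.deriv, deriv_const] at h4
  exact h4

/-- covector of a line -/
noncomputable def nv (x w : ℂ × ℂ) : ℂ × ℂ × ℂ := cr (liftPt ℂ x) (liftDir ℂ w)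

lemma nv_on {x w y : ℂ × ℂ} (h : y ∈ lineThru ℂ x w) : dt (nv x w) (liftPt ℂ y) = 0 := by
  obtain ⟨c, rfl⟩ := h
  simp [nv, dt, cr, liftPt, liftDir]; ring

lemma nv_br {x w y : ℂ × ℂ} (z : ℂ × ℂ) (h : y ∈ lineThru ℂ x w) :
    dt (nv x w) (liftPt ℂ z) = br w (z - y) := by
  obtain ⟨c, rfl⟩ := h
  simp [nv, dt, cr, liftPt, liftDir, br]; ring

lemma fv_br (v y z : ℂ × ℂ) :
    dt (cr (liftPt ℂ y) (liftDir ℂ v)) (liftPt ℂ z) = br v (z - y) := by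
  simp [dt, cr, liftPt, liftDir, br]; ring

lemma nv_ne {x w y z τ : ℂ × ℂ} {c : ℂ} (hw : w ≠ 0) (hτ0 : τ ≠ 0) (hτ : τ = c • w)
    (h : y ∈ lineThru ℂ x w) (hz : z - y ∉ Submodule.span ℂ {τ}) :
    dt (nv x w) (liftPt ℂ z) ≠ 0 := by
  rw [nv_br z h]
  intro h0
  obtain ⟨d, hd⟩ := br_eq_zero hw h0
  apply hz
  have hc : c ≠ 0 := by
    rintro rfl
    exact hτ0 (by simp [hτ])
  rw [Submodule.mem_span_singleton]
  refine ⟨d / c, ?_⟩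
  rw [hτ, hd, smul_smul, div_mul_cancel₀ _ hc]

lemma fv_ne {y v : ℂ × ℂ} (hv : v ≠ 0) : cr (liftPt ℂ y) (liftDir ℂ v) ≠ 0 := by
  intro h
  have h1 := congrArg Prod.fst h
  have h2 := congrArg (fun p => p.2.1) h
  simp [cr, liftPt, liftDir] at h1 h2
  exact hv (by ext <;> simp [*])

lemma fv_self (v y : ℂ × ℂ) : dt (cr (liftPt ℂ y) (liftDir ℂ v)) (liftPt ℂ y) = 0 := by
  rw [fv_br]; simp [br]

lemma analytic_dt {a : ℂ → ℂ × ℂ} {s : ℂ} (ha : AnalyticAt ℂ a s) (n : ℂ × ℂ × ℂ) :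
    AnalyticAt ℂ (fun s => dt n (liftPt ℂ (a s))) s := by
  have h1 : AnalyticAt ℂ (fun s => (a s).1) s := analyticAt_fst.comp ha
  have h2 : AnalyticAt ℂ (fun s => (a s).2) s := analyticAt_snd.comp ha
  simp only [dt, liftPt]
  fun_prop

lemma analytic_fv {a v : ℂ → ℂ × ℂ} {s : ℂ} (ha : AnalyticAt ℂ a s) (hv : AnalyticAt ℂ v s)
    (R : ℂ × ℂ × ℂ) :
    AnalyticAt ℂ (fun s => dt (cr (liftPt ℂ (a s)) (liftDir ℂ (v s))) R) s := by
  have h1 : AnalyticAt ℂ (fun s => (a s).1) s := analyticAt_fst.comp ha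
  have h2 : AnalyticAt ℂ (fun s => (a s).2) s := analyticAt_snd.comp ha
  have h3 : AnalyticAt ℂ (fun s => (v s).1) s := analyticAt_fst.comp hv
  have h4 : AnalyticAt ℂ (fun s => (v s).2) s := analyticAt_snd.comp hv
  simp only [dt, cr, liftPt, liftDir]
  fun_prop

lemma exists_ne_mem {S : Set ℂ} (hS : IsOpen S) {s : ℂ} (hs : s ∈ S) : ∃ s' ∈ S, s' ≠ s := by
  have h1 : ∀ᶠ t in nhdsWithin s {s}ᶜ, t ∈ S :=
    (hS.mem_nhds hs |> mem_nhdsWithin_of_mem_nhds)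
  have h2 : ∀ᶠ t in nhdsWithin s {s}ᶜ, t ≠ s := self_mem_nhdsWithin
  obtain ⟨t, ht⟩ := (h1.and h2).exists
  exact ⟨t, ht⟩

lemma inj2 {n1 n2 n3 X Y : ℂ × ℂ × ℂ} (hD : dt n1 (cr n2 n3) ≠ 0)
    (hX : dt n1 X = 0) (hY : dt n1 Y = 0) (hX2 : dt n2 X ≠ 0) (hY2 : dt n2 Y ≠ 0)
    (h : dt n3 X / dt n2 X = dt n3 Y / dt n2 Y) : ∃ c : ℂ, X = c • Y := by
  refine ⟨dt n2 X / dt n2 Y, pt_eq hD _ ?_ ?_ ?_⟩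
  · simp [hX, hY]
  · field_simp
  · field_simp at h ⊢
    linear_combination h

lemma tri_core {S T : Set ℂ} (hS : IsOpen S) (hT : IsOpen T) {s0 u0 : ℂ}
    (hs0 : s0 ∈ S) (hu0 : u0 ∈ T) (g : ℂ × ℂ → ℂ) {A B C f1 f2 f3 : ℂ → ℂ × ℂ × ℂ}
    {n1 n2 n3 : ℂ × ℂ × ℂ} (hD : dt n1 (cr n2 n3) ≠ 0)
    (hA : ∀ s ∈ S, dt n1 (A s) = 0) (hB : ∀ u ∈ T, dt n2 (B u) = 0)
    (hC : ∀ s ∈ S, ∀ u ∈ T, dt n3 (C (g (s, u))) = 0)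
    (hA2 : ∀ s ∈ S, dt n2 (A s) ≠ 0) (hA3 : ∀ s ∈ S, dt n3 (A s) ≠ 0)
    (hB1 : ∀ u ∈ T, dt n1 (B u) ≠ 0) (hB3 : ∀ u ∈ T, dt n3 (B u) ≠ 0)
    (hC1 : ∀ s ∈ S, ∀ u ∈ T, dt n1 (C (g (s, u))) ≠ 0)
    (hC2 : ∀ s ∈ S, ∀ u ∈ T, dt n2 (C (g (s, u))) ≠ 0)
    (hf1 : ∀ s ∈ S, f1 s ≠ 0) (hf2 : ∀ u ∈ T, f2 u ≠ 0)
    (hf3 : ∀ s ∈ S, ∀ u ∈ T, f3 (g (s, u)) ≠ 0)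
    (hfA : ∀ s ∈ S, dt (f1 s) (A s) = 0) (hfB : ∀ u ∈ T, dt (f2 u) (B u) = 0)
    (hfC : ∀ s ∈ S, ∀ u ∈ T, dt (f3 (g (s, u))) (C (g (s, u))) = 0)
    (hAi : ∀ s ∈ S, ∀ s' ∈ S, ∀ c : ℂ, A s = c • A s' → s = s')
    (hBi : ∀ s ∈ T, ∀ s' ∈ T, ∀ c : ℂ, B s = c • B s' → s = s')
    (l1 : ∀ s ∈ S, ∀ u ∈ T, dt n1 (B u) * dt (f1 s) (C (g (s, u)))
      + dt n1 (C (g (s, u))) * dt (f1 s) (B u) = 0)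
    (l2 : ∀ s ∈ S, ∀ u ∈ T, dt n2 (A s) * dt (f2 u) (C (g (s, u)))
      + dt n2 (C (g (s, u))) * dt (f2 u) (A s) = 0)
    (l3 : ∀ s ∈ S, ∀ u ∈ T, dt n3 (A s) * dt (f3 (g (s, u))) (B u)
      + dt n3 (B u) * dt (f3 (g (s, u))) (A s) = 0) :
    (∀ s ∈ S, dt (f1 s) (cr n2 n3) = 0) ∧ (∀ u ∈ T, dt (f2 u) (cr n3 n1) = 0) ∧
    (∀ s ∈ S, ∀ u ∈ T, dt (f3 (g (s, u))) (cr n1 n2) = 0) ∧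
    (∀ s ∈ S, ∀ s' ∈ S, ∀ u ∈ T, g (s, u) = g (s', u) → s = s') := by
  have hD2 : dt n2 (cr n3 n1) ≠ 0 := by rwa [dt_cyc]
  have hD3 : dt n3 (cr n1 n2) ≠ 0 := by rwa [dt_cyc]
  have e1 : ∀ s ∈ S, ∀ u ∈ T, _ := fun s hs u hu => tri_law hD (hA s hs) (hA2 s hs) (hB u hu)
    (hB1 u hu) (hC s hs u hu) (hC1 s hs u hu) (hf1 s hs) (hfA s hs) (l1 s hs u hu)
  have e2 : ∀ s ∈ S, ∀ u ∈ T, _ := fun s hs u hu => tri_law hD2 (hB u hu) (hB3 u hu)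
    (hC s hs u hu) (hC2 s hs u hu) (hA s hs) (hA2 s hs) (hf2 u hu) (hfB u hu)
    ((add_comm _ _).trans (l2 s hs u hu))
  have e3 : ∀ s ∈ S, ∀ u ∈ T, _ := fun s hs u hu => tri_law hD3 (hC s hs u hu) (hC1 s hs u hu)
    (hA s hs) (hA3 s hs) (hB u hu) (hB3 u hu) (hf3 s hs u hu) (hfC s hs u hu)
    (l3 s hs u hu)
  obtain ⟨x, hx⟩ : ∃ x : ℂ → ℂ, ∀ s, x s = dt n3 (A s) / dt n2 (A s) := ⟨_, fun _ => rfl⟩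
  obtain ⟨y, hy⟩ : ∃ y : ℂ → ℂ, ∀ u, y u = dt n1 (B u) / dt n3 (B u) := ⟨_, fun _ => rfl⟩
  obtain ⟨z, hz⟩ : ∃ z : ℂ → ℂ, ∀ t, z t = dt n2 (C t) / dt n1 (C t) := ⟨_, fun _ => rfl⟩
  obtain ⟨μ, hμ⟩ : ∃ μ : ℂ → ℂ, ∀ s, μ s = -2 * dt (f1 s) (cr n2 n3) / dt (f1 s) (cr n1 n2) :=
    ⟨_, fun _ => rfl⟩
  obtain ⟨ν, hν⟩ : ∃ μ : ℂ → ℂ, ∀ s, μ s = -2 * dt (f2 s) (cr n3 n1) / dt (f2 s) (cr n2 n3) :=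
    ⟨_, fun _ => rfl⟩
  obtain ⟨κ, hκ⟩ : ∃ μ : ℂ → ℂ, ∀ s, μ s = -2 * dt (f3 s) (cr n1 n2) / dt (f3 s) (cr n3 n1) :=
    ⟨_, fun _ => rfl⟩
  have x0 : ∀ s ∈ S, x s ≠ 0 := fun s hs => by rw [hx]; exact div_ne_zero (hA3 s hs) (hA2 s hs)
  have y0 : ∀ s ∈ T, y s ≠ 0 := fun s hs => by rw [hy]; exact div_ne_zero (hB1 s hs) (hB3 s hs)
  have z0 : ∀ s ∈ S, ∀ u ∈ T, z (g (s, u)) ≠ 0 := fun s hs u hu => by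
    rw [hz]; exact div_ne_zero (hC2 s hs u hu) (hC1 s hs u hu)
  have E1 : ∀ s ∈ S, ∀ u ∈ T, 1 - x s * y u * z (g (s, u)) = y u * μ s := by
    intro s hs u hu
    have h := (e1 s hs u hu).2
    rw [← hμ, ← hz, ← hx, ← inv_div, ← hy] at h
    have := y0 u hu
    field_simp at h
    linear_combination h
  have E2 : ∀ s ∈ S, ∀ u ∈ T, 1 - x s * y u * z (g (s, u)) = z (g (s, u)) * ν u := by
    intro s hs u hu
    have h := (e2 s hs u hu).2
    rw [← hν, ← hx, ← hy, ← inv_div, ← hz] at h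
    have := z0 s hs u hu
    field_simp at h
    linear_combination h
  have E3 : ∀ s ∈ S, ∀ u ∈ T, 1 - x s * y u * z (g (s, u)) = x s * κ (g (s, u)) := by
    intro s hs u hu
    have h := (e3 s hs u hu).2
    rw [← hκ, ← hy, ← hz, ← inv_div, ← hx] at h
    have := x0 s hs
    field_simp at h
    linear_combination h
  have xi : ∀ s ∈ S, ∀ s' ∈ S, x s = x s' → s = s' := by
    intro s hs s' hs' h
    rw [hx, hx] at h
    obtain ⟨c, hc⟩ := inj2 hD (hA s hs) (hA s' hs') (hA2 s hs) (hA2 s' hs') h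
    exact hAi s hs s' hs' c hc
  have yi : ∀ s ∈ T, ∀ s' ∈ T, y s = y s' → s = s' := by
    intro s hs s' hs' h
    rw [hy, hy] at h
    obtain ⟨c, hc⟩ := inj2 hD2 (hB s hs) (hB s' hs') (hB3 s hs) (hB3 s' hs') h
    exact hBi s hs s' hs' c hc
  have n : ∀ s ∈ S, ∀ u ∈ T, 1 - y u * μ s ≠ 0 := by
    intro s hs u hu
    have : 1 - y u * μ s = x s * y u * z (g (s, u)) := by linear_combination E1 s hs u hu
    rw [this]
    exact mul_ne_zero (mul_ne_zero (x0 s hs) (y0 u hu)) (z0 s hs u hu)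
  have h : ∀ s ∈ S, ∀ u ∈ T, ν u * (1 - y u * μ s) = x s * y u ^ 2 * μ s := by
    intro s hs u hu
    linear_combination (ν u + x s * y u) * E1 s hs u hu - x s * y u * E2 s hs u hu
  have hμ0 : ∀ s ∈ S, μ s = 0 := by
    intro s hs
    obtain ⟨s', hs', hne⟩ := exists_ne_mem hS hs
    obtain ⟨u', hu', hne'⟩ := exists_ne_mem hT hu0
    exact tri_alg (x0 s hs) (x0 s' hs') (y0 u0 hu0) (y0 u' hu')
      (fun h => hne (xi s hs s' hs' h).symm) (fun h => hne' (yi u0 hu0 u' hu' h).symm)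
      (n s' hs' u0 hu0)
      (h s hs u0 hu0) (h s hs u' hu') (h s' hs' u0 hu0) (h s' hs' u' hu')
  have E : ∀ s ∈ S, ∀ u ∈ T, x s * y u * z (g (s, u)) = 1 := by
    intro s hs u hu
    linear_combination -E1 s hs u hu - y u * hμ0 s hs
  refine ⟨?_, ?_, ?_, ?_⟩
  · intro s hs
    have := hμ0 s hs
    rw [hμ] at this
    simpa [(e1 s hs u0 hu0).1] using this
  · intro u hu
    have h2 := E2 s0 hs0 u hu
    rw [E s0 hs0 u hu, sub_self, eq_comm, mul_eq_zero] at h2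
    have := h2.resolve_left (z0 s0 hs0 u hu)
    rw [hν] at this
    simpa [(e2 s0 hs0 u hu).1] using this
  · intro s hs u hu
    have h2 := E3 s hs u hu
    rw [E s hs u hu, sub_self, eq_comm, mul_eq_zero] at h2
    have := h2.resolve_left (x0 s hs)
    rw [hκ] at this
    simpa [(e3 s hs u hu).1] using this
  · intro s hs s' hs' u hu hg
    apply xi s hs s' hs'
    have a := E s hs u hu
    have b := E s' hs' u hu
    rw [← hg] at b
    apply mul_right_cancel₀ (mul_ne_zero (y0 u hu) (z0 s hs u hu))
    linear_combination a - b

lemma conc_core {S T : Set ℂ} (hS : IsOpen S) (hT : IsOpen T) {s0 u0 : ℂ}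
    (hs0 : s0 ∈ S) (hu0 : u0 ∈ T) (g : ℂ × ℂ → ℂ) {A B C f1 f2 f3 : ℂ → ℂ × ℂ × ℂ}
    {n1 n2 n3 : ℂ × ℂ × ℂ} (hD0 : dt n1 (cr n2 n3) = 0)
    (hA : ∀ s ∈ S, dt n1 (A s) = 0) (hB : ∀ u ∈ T, dt n2 (B u) = 0)
    (hC : ∀ s ∈ S, ∀ u ∈ T, dt n3 (C (g (s, u))) = 0)
    (hA2 : ∀ s ∈ S, dt n2 (A s) ≠ 0) (hA3 : ∀ s ∈ S, dt n3 (A s) ≠ 0)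
    (hB1 : ∀ u ∈ T, dt n1 (B u) ≠ 0) (hB3 : ∀ u ∈ T, dt n3 (B u) ≠ 0)
    (hC1 : ∀ s ∈ S, ∀ u ∈ T, dt n1 (C (g (s, u))) ≠ 0)
    (hC2 : ∀ s ∈ S, ∀ u ∈ T, dt n2 (C (g (s, u))) ≠ 0)
    (hf1 : ∀ s ∈ S, f1 s ≠ 0) (hf2 : ∀ u ∈ T, f2 u ≠ 0)
    (hf3 : ∀ s ∈ S, ∀ u ∈ T, f3 (g (s, u)) ≠ 0)
    (hfA : ∀ s ∈ S, dt (f1 s) (A s) = 0) (hfB : ∀ u ∈ T, dt (f2 u) (B u) = 0)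
    (hfC : ∀ s ∈ S, ∀ u ∈ T, dt (f3 (g (s, u))) (C (g (s, u))) = 0)
    (hAi : ∀ s ∈ S, ∀ s' ∈ S, ∀ c : ℂ, A s = c • A s' → s = s')
    (hBi : ∀ s ∈ T, ∀ s' ∈ T, ∀ c : ℂ, B s = c • B s' → s = s')
    (hCi : ∀ s ∈ S, ∀ u ∈ T, ∀ s' ∈ S, ∀ u' ∈ T, ∀ c : ℂ,
      C (g (s, u)) = c • C (g (s', u')) → g (s, u) = g (s', u'))
    (hAa : ∀ n, AnalyticAt ℂ (fun s => dt n (A s)) s0)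
    (hBa : ∀ n, AnalyticAt ℂ (fun s => dt n (B s)) u0)
    (l1 : ∀ s ∈ S, ∀ u ∈ T, dt n1 (B u) * dt (f1 s) (C (g (s, u)))
      + dt n1 (C (g (s, u))) * dt (f1 s) (B u) = 0)
    (l2 : ∀ s ∈ S, ∀ u ∈ T, dt n2 (A s) * dt (f2 u) (C (g (s, u)))
      + dt n2 (C (g (s, u))) * dt (f2 u) (A s) = 0)
    (l3 : ∀ s ∈ S, ∀ u ∈ T, dt n3 (A s) * dt (f3 (g (s, u))) (B u)
      + dt n3 (B u) * dt (f3 (g (s, u))) (A s) = 0) : False := by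
  obtain ⟨m, hm⟩ : ∃ m, m = cr (A s0) (B u0) := ⟨_, rfl⟩
  have hmO : dt m (cr n1 n2) = - (dt n2 (A s0) * dt n1 (B u0)) := by
    have : dt m (cr n1 n2) = dt n1 (A s0) * dt n2 (B u0) - dt n2 (A s0) * dt n1 (B u0) := by
      rw [hm]; simp only [dt, cr]; ring
    rw [this, hA s0 hs0]; ring
  have hmO' : dt m (cr n1 n2) ≠ 0 := by
    rw [hmO]; exact neg_ne_zero.2 (mul_ne_zero (hA2 s0 hs0) (hB1 u0 hu0))
  have hD : dt n1 (cr n2 m) ≠ 0 := by rwa [← dt_cyc, ← dt_cyc]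
  have hD2 : dt n2 (cr n1 m) ≠ 0 := by
    have : dt n2 (cr n1 m) = - dt n1 (cr n2 m) := by simp only [dt, cr]; ring
    rw [this]; exact neg_ne_zero.2 hD
  obtain ⟨α, hα⟩ : ∃ α, α = dt n3 (B u0) / dt n1 (B u0) := ⟨_, rfl⟩
  obtain ⟨β, hβ⟩ : ∃ β, β = dt n3 (A s0) / dt n2 (A s0) := ⟨_, rfl⟩
  have hα0 : α ≠ 0 := by rw [hα]; exact div_ne_zero (hB3 _ hu0) (hB1 _ hu0)
  have hβ0 : β ≠ 0 := by rw [hβ]; exact div_ne_zero (hA3 _ hs0) (hA2 _ hs0)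
  have hn3 : ∀ X, dt n3 X = α * dt n1 X + β * dt n2 X := by
    intro X
    -- expand in the basis A, B, O
    have key : dt n3 X * dt m (cr n1 n2) =
        dt n3 (A s0) * dt X (cr (B u0) (cr n1 n2)) + dt n3 (B u0) * dt X (cr (cr n1 n2) (A s0))
          + dt n1 (cr n2 n3) * dt m X := by
      rw [hm]; simp only [dt, cr]; ring
    have k1 : dt X (cr (B u0) (cr n1 n2)) = - dt n1 (B u0) * dt n2 X + dt n2 (B u0) * dt n1 X := by
      simp only [dt, cr]; ring
    have k2 : dt X (cr (cr n1 n2) (A s0)) = dt n1 (A s0) * dt n2 X - dt n2 (A s0) * dt n1 X := by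
      simp only [dt, cr]; ring
    rw [k1, k2, hD0, hA s0 hs0, hB u0 hu0, hmO] at key
    have h1 := hA2 s0 hs0
    have h2 := hB1 u0 hu0
    rw [hα, hβ]
    field_simp
    linear_combination -key
  have e1 : ∀ s ∈ S, ∀ u ∈ T, _ := fun s hs u hu => conc_A hD (hA s hs) (hA2 s hs) (hB u hu)
    (hB1 u hu) (hC1 s hs u hu) (hf1 s hs) (hfA s hs) (l1 s hs u hu)
  have e2 : ∀ s ∈ S, ∀ u ∈ T, _ := fun s hs u hu => conc_B hD (hA s hs) (hA2 s hs) (hB u hu)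
    (hB1 u hu) (hC1 s hs u hu) (hC2 s hs u hu) (hf2 u hu) (hfB u hu) (l2 s hs u hu)
  have e3 : ∀ s ∈ S, ∀ u ∈ T, _ := fun s hs u hu => conc_C hD hn3 hα0 hβ0 (hA s hs) (hA2 s hs)
    (hB u hu) (hB1 u hu) (hC1 s hs u hu) (hC s hs u hu) (hf3 s hs u hu) (hfC s hs u hu)
    (l3 s hs u hu)
  have hδ : ∀ s ∈ S, ∀ u ∈ T, dt n2 (C (g (s, u))) / dt n1 (C (g (s, u))) = -(α / β) := by
    intro s hs u hu
    have h1 := hC s hs u hu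
    have h2 := hC1 s hs u hu
    rw [hn3] at h1
    field_simp
    linear_combination h1
  obtain ⟨δ, hδd⟩ : ∃ δ, δ = -(α / β) := ⟨_, rfl⟩
  have hδ0 : δ ≠ 0 := by rw [hδd]; exact neg_ne_zero.2 (div_ne_zero hα0 hβ0)
  obtain ⟨x, hx⟩ : ∃ x : ℂ → ℂ, ∀ s, x s = dt m (A s) / dt n2 (A s) := ⟨_, fun _ => rfl⟩
  obtain ⟨y, hy⟩ : ∃ y : ℂ → ℂ, ∀ u, y u = dt m (B u) / dt n1 (B u) := ⟨_, fun _ => rfl⟩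
  obtain ⟨z, hz⟩ : ∃ z : ℂ → ℂ, ∀ t, z t = dt m (C t) / dt n1 (C t) := ⟨_, fun _ => rfl⟩
  have E1 : ∃ μ : ℂ → ℂ, ∀ s ∈ S, ∀ u ∈ T, z (g (s, u)) + y u = μ s := by
    refine ⟨fun s => -2 * dt (f1 s) (cr n2 m) / dt (f1 s) (cr n1 n2) + δ * x s, ?_⟩
    intro s hs u hu
    have h := e1 s hs u hu
    rwa [← hx, ← hy, ← hz, hδ s hs u hu, ← hδd] at h
  have E2 : ∃ μ : ℂ → ℂ, ∀ s ∈ S, ∀ u ∈ T, z (g (s, u)) + δ * x s = μ u := by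
    refine ⟨fun u => -2 * δ * dt (f2 u) (cr m n1) / dt (f2 u) (cr n1 n2) + y u, ?_⟩
    intro s hs u hu
    have h := e2 s hs u hu
    rwa [← hx, ← hy, ← hz, hδ s hs u hu, ← hδd] at h
  have E3 : ∃ μ : ℂ → ℂ, ∀ s ∈ S, ∀ u ∈ T, y u - δ * x s = μ (g (s, u)) := by
    refine ⟨fun t => - (dt (f3 t) (cr n2 m) + α / β * dt (f3 t) (cr m n1)) /
      dt (f3 t) (cr n1 n2), ?_⟩
    intro s hs u hu
    have h := e3 s hs u hu
    rw [← hx, ← hy] at h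
    refine Eq.trans ?_ h
    rw [hδd]; ring
  obtain ⟨h1, E1⟩ := E1
  obtain ⟨h2, E2⟩ := E2
  obtain ⟨h3, E3⟩ := E3
  -- the sum is constant
  have hc : ∀ s ∈ S, ∀ u ∈ T, z (g (s, u)) + y u + δ * x s
      = z (g (s0, u0)) + y u0 + δ * x s0 := by
    intro s hs u hu
    linear_combination E1 s hs u hu - E1 s hs u0 hu0 + E2 s hs u0 hu0 - E2 s0 hs0 u0 hu0
  have xi : ∀ s ∈ S, ∀ s' ∈ S, x s = x s' → s = s' := by
    intro s hs s' hs' h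
    rw [hx, hx] at h
    obtain ⟨c, hc⟩ := inj2 hD (hA s hs) (hA s' hs') (hA2 s hs) (hA2 s' hs') h
    exact hAi s hs s' hs' c hc
  have yi : ∀ s ∈ T, ∀ s' ∈ T, y s = y s' → s = s' := by
    intro s hs s' hs' h
    rw [hy, hy] at h
    obtain ⟨c, hc⟩ := inj2 hD2 (hB s hs) (hB s' hs') (hB1 s hs) (hB1 s' hs') h
    exact hBi s hs s' hs' c hc
  have zi : ∀ s ∈ S, ∀ u ∈ T, ∀ s' ∈ S, ∀ u' ∈ T, z (g (s, u)) = z (g (s', u')) →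
      g (s, u) = g (s', u') := by
    intro s hs u hu s' hs' u' hu' h
    rw [hz, hz] at h
    have d1 := hδ s hs u hu
    have d2 := hδ s' hs' u' hu'
    have c1 := hC1 s hs u hu
    have c2 := hC1 s' hs' u' hu'
    refine hCi s hs u hu s' hs' u' hu'
      (dt n1 (C (g (s, u))) / dt n1 (C (g (s', u')))) (pt_eq hD _ ?_ ?_ ?_)
    · field_simp
    · rw [← d2] at d1
      field_simp at d1 ⊢
      linear_combination d1
    · field_simp at h ⊢
      linear_combination h
  have xa : AnalyticAt ℂ x s0 := by
    have : x = fun s => dt m (A s) / dt n2 (A s) := funext hx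
    rw [this]
    exact (hAa m).div (hAa n2) (hA2 s0 hs0)
  have ya : ContinuousAt y u0 := by
    have : y = fun s => dt m (B s) / dt n1 (B s) := funext hy
    rw [this]
    exact ((hBa m).div (hBa n1) (hB1 u0 hu0)).continuousAt
  have hopen : nhds (x s0) ≤ Filter.map x (nhds s0) := by
    rcases xa.eventually_constant_or_nhds_le_map_nhds with h | h
    · exfalso
      have h' := (h.and (hS.eventually_mem hs0)).filter_mono (nhdsWithin_le_nhds (s := {s0}ᶜ))
      have h2 : ∀ᶠ t in nhdsWithin s0 {s0}ᶜ, t ≠ s0 := self_mem_nhdsWithin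
      obtain ⟨t, ⟨ht1, ht2⟩, ht3⟩ := (Filter.Eventually.and h' h2).exists
      exact ht3 (xi t ht2 s0 hs0 ht1)
    · exact h
  have hSx : x '' S ∈ nhds (x s0) := hopen (Filter.image_mem_map (hS.mem_nhds hs0))
  have hcont : Filter.Tendsto (fun u => x s0 + (y u0 - y u) / δ) (nhds u0) (nhds (x s0)) := by
    have : ContinuousAt (fun u => x s0 + (y u0 - y u) / δ) u0 := by fun_prop
    have h := this.tendsto
    simpa using h
  have hev := ((hcont.eventually hSx).and (hT.eventually_mem hu0)).filter_mono
    (nhdsWithin_le_nhds (s := {u0}ᶜ))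
  have hne : ∀ᶠ t in nhdsWithin u0 {u0}ᶜ, t ≠ u0 := self_mem_nhdsWithin
  obtain ⟨u, ⟨⟨s, hs, hsx⟩, hu⟩, hune⟩ := (Filter.Eventually.and hev hne).exists
  have hsum : y u + δ * x s = y u0 + δ * x s0 := by
    rw [hsx]; field_simp; ring
  have hzz := zi s hs u hu s0 hs0 u0 hu0 (by linear_combination hc s hs u hu - hsum)
  have a := E3 s hs u hu
  rw [hzz, ← E3 s0 hs0 u0 hu0] at a
  exact hune (yi u hu u0 hu0 (by linear_combination (a + hsum) / 2))

set_option maxHeartbeats 1000000 in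
/-- **Proposition 3.5.** A 3-reflective triple of complex analytic line-framed curves in `ℂ²`
whose classical borders are supported by pairwise distinct lines is right-spherical. -/
theorem three_reflective_on_lines_is_right_spherical
    (U₁ U₂ U₃ : Set ℂ) (a₁ a₂ a₃ v₁ v₂ v₃ : ℂ → ℂ × ℂ)
    (hU₁o : IsOpen U₁) (hU₂o : IsOpen U₂) (hU₃o : IsOpen U₃)
    (hU₁c : IsConnected U₁) (hU₂c : IsConnected U₂) (hU₃c : IsConnected U₃)
    -- the `(aᵢ, vᵢ)` are complex analytic line-framed curves
    (ha₁ : AnalyticOnNhd ℂ a₁ U₁) (ha₂ : AnalyticOnNhd ℂ a₂ U₂)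
    (ha₃ : AnalyticOnNhd ℂ a₃ U₃)
    (ha₁i : Set.InjOn a₁ U₁) (ha₂i : Set.InjOn a₂ U₂) (ha₃i : Set.InjOn a₃ U₃)
    (ha₁' : ∀ s ∈ U₁, deriv a₁ s ≠ 0) (ha₂' : ∀ u ∈ U₂, deriv a₂ u ≠ 0)
    (ha₃' : ∀ t ∈ U₃, deriv a₃ t ≠ 0)
    (hv₁ : AnalyticOnNhd ℂ v₁ U₁) (hv₂ : AnalyticOnNhd ℂ v₂ U₂)
    (hv₃ : AnalyticOnNhd ℂ v₃ U₃)
    (hv₁t : ∀ s ∈ U₁, v₁ s ∉ Submodule.span ℂ {deriv a₁ s})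
    (hv₂t : ∀ u ∈ U₂, v₂ u ∉ Submodule.span ℂ {deriv a₂ u})
    (hv₃t : ∀ t ∈ U₃, v₃ t ∉ Submodule.span ℂ {deriv a₃ t})
    -- the classical borders are supported by pairwise distinct lines ℓ₁, ℓ₂, ℓ₃
    (x₁ w₁ x₂ w₂ x₃ w₃ : ℂ × ℂ)
    (hw₁ : w₁ ≠ 0) (hw₂ : w₂ ≠ 0) (hw₃ : w₃ ≠ 0)
    (hl₁ : ∀ s ∈ U₁, a₁ s ∈ lineThru ℂ x₁ w₁)
    (hl₂ : ∀ u ∈ U₂, a₂ u ∈ lineThru ℂ x₂ w₂)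
    (hl₃ : ∀ t ∈ U₃, a₃ t ∈ lineThru ℂ x₃ w₃)
    (hl₁₂ : lineThru ℂ x₁ w₁ ≠ lineThru ℂ x₂ w₂)
    (hl₂₃ : lineThru ℂ x₂ w₂ ≠ lineThru ℂ x₃ w₃)
    (hl₃₁ : lineThru ℂ x₃ w₃ ≠ lineThru ℂ x₁ w₁)
    -- 3-reflectivity data (Ω, g)
    (Ω : Set (ℂ × ℂ)) (g : ℂ × ℂ → ℂ)
    (hΩo : IsOpen Ω) (hΩne : Ω.Nonempty) (hΩ : Ω ⊆ U₁ ×ˢ U₂)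
    (hg : ContinuousOn g Ω) (hgm : ∀ z ∈ Ω, g z ∈ U₃)
    (hcol : ∀ z ∈ Ω, ¬ Collinear ℂ {a₁ z.1, a₂ z.2, a₃ (g z)})
    (htan₁ : ∀ z ∈ Ω, a₂ z.2 - a₁ z.1 ∉ Submodule.span ℂ {deriv a₁ z.1} ∧
      a₃ (g z) - a₁ z.1 ∉ Submodule.span ℂ {deriv a₁ z.1})
    (htan₂ : ∀ z ∈ Ω, a₁ z.1 - a₂ z.2 ∉ Submodule.span ℂ {deriv a₂ z.2} ∧
      a₃ (g z) - a₂ z.2 ∉ Submodule.span ℂ {deriv a₂ z.2})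
    (htan₃ : ∀ z ∈ Ω, a₁ z.1 - a₃ (g z) ∉ Submodule.span ℂ {deriv a₃ (g z)} ∧
      a₂ z.2 - a₃ (g z) ∉ Submodule.span ℂ {deriv a₃ (g z)})
    (href₁ : ∀ z ∈ Ω,
      PlaneSym ℂ (v₁ z.1) (deriv a₁ z.1) (a₂ z.2 - a₁ z.1) (a₃ (g z) - a₁ z.1))
    (href₂ : ∀ z ∈ Ω,
      PlaneSym ℂ (v₂ z.2) (deriv a₂ z.2) (a₁ z.1 - a₂ z.2) (a₃ (g z) - a₂ z.2))
    (href₃ : ∀ z ∈ Ω,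
      PlaneSym ℂ (v₃ (g z)) (deriv a₃ (g z)) (a₁ z.1 - a₃ (g z)) (a₂ z.2 - a₃ (g z))) :
    ∃ P Q R : ℂ × ℂ × ℂ, LinearIndependent ℂ ![P, Q, R] ∧
      (∀ s ∈ U₁, liftPt ℂ (a₁ s) ∈ Submodule.span ℂ {P, Q} ∧
        R ∈ Submodule.span ℂ {liftPt ℂ (a₁ s), liftDir ℂ (v₁ s)}) ∧
      (∀ u ∈ U₂, liftPt ℂ (a₂ u) ∈ Submodule.span ℂ {Q, R} ∧
        P ∈ Submodule.span ℂ {liftPt ℂ (a₂ u), liftDir ℂ (v₂ u)}) ∧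
      (∀ t ∈ U₃, liftPt ℂ (a₃ t) ∈ Submodule.span ℂ {R, P} ∧
        Q ∈ Submodule.span ℂ {liftPt ℂ (a₃ t), liftDir ℂ (v₃ t)}) := by
  obtain ⟨⟨s0, u0⟩, hz0⟩ := hΩne
  obtain ⟨S, T, hS, hT, hs0, hu0, hST⟩ := isOpen_prod_iff.1 hΩo s0 u0 hz0
  have hin : ∀ s ∈ S, ∀ u ∈ T, (s, u) ∈ Ω := fun s hs u hu => hST ⟨hs, hu⟩
  have hSU : ∀ s ∈ S, s ∈ U₁ := fun s hs => (hΩ (hin s hs u0 hu0)).1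
  have hTU : ∀ u ∈ T, u ∈ U₂ := fun u hu => (hΩ (hin s0 hs0 u hu)).2
  have hG : ∀ s ∈ S, ∀ u ∈ T, g (s, u) ∈ U₃ := fun s hs u hu => hgm _ (hin s hs u hu)
  have hd₁ : ∀ s ∈ U₁, _ := fun s hs => deriv_line hU₁o ha₁ hw₁ hl₁ hs
  have hd₂ : ∀ s ∈ U₂, _ := fun s hs => deriv_line hU₂o ha₂ hw₂ hl₂ hs
  have hd₃ : ∀ s ∈ U₃, _ := fun s hs => deriv_line hU₃o ha₃ hw₃ hl₃ hs
  have v0₁ : ∀ s ∈ U₁, v₁ s ≠ 0 := fun s hs h => hv₁t s hs (by rw [h]; exact zero_mem _)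
  have v0₂ : ∀ s ∈ U₂, v₂ s ≠ 0 := fun s hs h => hv₂t s hs (by rw [h]; exact zero_mem _)
  have v0₃ : ∀ s ∈ U₃, v₃ s ≠ 0 := fun s hs h => hv₃t s hs (by rw [h]; exact zero_mem _)
  have hA : ∀ s ∈ U₁, dt (nv x₁ w₁) (liftPt ℂ (a₁ s)) = 0 := fun s hs => nv_on (hl₁ s hs)
  have hB : ∀ s ∈ U₂, dt (nv x₂ w₂) (liftPt ℂ (a₂ s)) = 0 := fun s hs => nv_on (hl₂ s hs)
  have hC : ∀ s ∈ U₃, dt (nv x₃ w₃) (liftPt ℂ (a₃ s)) = 0 := fun s hs => nv_on (hl₃ s hs)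
  have hB1 : ∀ u ∈ T, dt (nv x₁ w₁) (liftPt ℂ (a₂ u)) ≠ 0 := fun u hu =>
    nv_ne hw₁ (ha₁' s0 (hSU s0 hs0)) (hd₁ s0 (hSU s0 hs0)).choose_spec (hl₁ s0 (hSU s0 hs0))
      (htan₁ (s0, u) (hin s0 hs0 u hu)).1
  have hC1 : ∀ s ∈ S, ∀ u ∈ T, dt (nv x₁ w₁) (liftPt ℂ (a₃ (g (s, u)))) ≠ 0 :=
    fun s hs u hu => nv_ne hw₁ (ha₁' s (hSU s hs)) (hd₁ s (hSU s hs)).choose_spec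
      (hl₁ s (hSU s hs)) (htan₁ (s, u) (hin s hs u hu)).2
  have hA2 : ∀ s ∈ S, dt (nv x₂ w₂) (liftPt ℂ (a₁ s)) ≠ 0 := fun s hs =>
    nv_ne hw₂ (ha₂' u0 (hTU u0 hu0)) (hd₂ u0 (hTU u0 hu0)).choose_spec (hl₂ u0 (hTU u0 hu0))
      (htan₂ (s, u0) (hin s hs u0 hu0)).1
  have hC2 : ∀ s ∈ S, ∀ u ∈ T, dt (nv x₂ w₂) (liftPt ℂ (a₃ (g (s, u)))) ≠ 0 :=
    fun s hs u hu => nv_ne hw₂ (ha₂' u (hTU u hu)) (hd₂ u (hTU u hu)).choose_spec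
      (hl₂ u (hTU u hu)) (htan₂ (s, u) (hin s hs u hu)).2
  have hA3 : ∀ s ∈ S, dt (nv x₃ w₃) (liftPt ℂ (a₁ s)) ≠ 0 := fun s hs =>
    nv_ne hw₃ (ha₃' _ (hG s hs u0 hu0)) (hd₃ _ (hG s hs u0 hu0)).choose_spec
      (hl₃ _ (hG s hs u0 hu0)) (htan₃ (s, u0) (hin s hs u0 hu0)).1
  have hB3 : ∀ u ∈ T, dt (nv x₃ w₃) (liftPt ℂ (a₂ u)) ≠ 0 := fun u hu =>
    nv_ne hw₃ (ha₃' _ (hG s0 hs0 u hu)) (hd₃ _ (hG s0 hs0 u hu)).choose_spec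
      (hl₃ _ (hG s0 hs0 u hu)) (htan₃ (s0, u) (hin s0 hs0 u hu)).2
  obtain ⟨f1, hf1d⟩ : ∃ f : ℂ → ℂ × ℂ × ℂ, ∀ s, f s = cr (liftPt ℂ (a₁ s)) (liftDir ℂ (v₁ s)) :=
    ⟨_, fun _ => rfl⟩
  obtain ⟨f2, hf2d⟩ : ∃ f : ℂ → ℂ × ℂ × ℂ, ∀ s, f s = cr (liftPt ℂ (a₂ s)) (liftDir ℂ (v₂ s)) :=
    ⟨_, fun _ => rfl⟩
  obtain ⟨f3, hf3d⟩ : ∃ f : ℂ → ℂ × ℂ × ℂ, ∀ s, f s = cr (liftPt ℂ (a₃ s)) (liftDir ℂ (v₃ s)) :=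
    ⟨_, fun _ => rfl⟩
  have hf1 : ∀ s ∈ S, f1 s ≠ 0 := fun s hs => by rw [hf1d]; exact fv_ne (v0₁ s (hSU s hs))
  have hf2 : ∀ s ∈ T, f2 s ≠ 0 := fun s hs => by rw [hf2d]; exact fv_ne (v0₂ s (hTU s hs))
  have hf3 : ∀ s ∈ S, ∀ u ∈ T, f3 (g (s, u)) ≠ 0 := fun s hs u hu => by
    rw [hf3d]; exact fv_ne (v0₃ _ (hG s hs u hu))
  have hfA : ∀ s ∈ S, dt (f1 s) (liftPt ℂ (a₁ s)) = 0 := fun s _ => by rw [hf1d, fv_self]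
  have hfB : ∀ s ∈ T, dt (f2 s) (liftPt ℂ (a₂ s)) = 0 := fun s _ => by rw [hf2d, fv_self]
  have hfC : ∀ s ∈ S, ∀ u ∈ T, dt (f3 (g (s, u))) (liftPt ℂ (a₃ (g (s, u)))) = 0 :=
    fun s _ u _ => by rw [hf3d, fv_self]
  have hAi : ∀ s ∈ S, ∀ s' ∈ S, ∀ c : ℂ, liftPt ℂ (a₁ s) = c • liftPt ℂ (a₁ s') → s = s' :=
    fun s hs s' hs' c h => ha₁i (hSU s hs) (hSU s' hs') (liftPt_inj h)
  have hBi : ∀ s ∈ T, ∀ s' ∈ T, ∀ c : ℂ, liftPt ℂ (a₂ s) = c • liftPt ℂ (a₂ s') → s = s' :=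
    fun s hs s' hs' c h => ha₂i (hTU s hs) (hTU s' hs') (liftPt_inj h)
  have hCi : ∀ s ∈ S, ∀ u ∈ T, ∀ s' ∈ S, ∀ u' ∈ T, ∀ c : ℂ,
      liftPt ℂ (a₃ (g (s, u))) = c • liftPt ℂ (a₃ (g (s', u'))) → g (s, u) = g (s', u') :=
    fun s hs u hu s' hs' u' hu' c h => ha₃i (hG s hs u hu) (hG s' hs' u' hu') (liftPt_inj h)
  have l1 : ∀ s ∈ S, ∀ u ∈ T,
      dt (nv x₁ w₁) (liftPt ℂ (a₂ u)) * dt (f1 s) (liftPt ℂ (a₃ (g (s, u))))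
      + dt (nv x₁ w₁) (liftPt ℂ (a₃ (g (s, u)))) * dt (f1 s) (liftPt ℂ (a₂ u)) = 0 := by
    intro s hs u hu
    rw [hf1d, fv_br, fv_br, nv_br _ (hl₁ s (hSU s hs)), nv_br _ (hl₁ s (hSU s hs))]
    have hsym := href₁ (s, u) (hin s hs u hu)
    have hlaw := law_of_sym (hd₁ s (hSU s hs)).choose_spec hsym
    exact hlaw
  have l2 : ∀ s ∈ S, ∀ u ∈ T,
      dt (nv x₂ w₂) (liftPt ℂ (a₁ s)) * dt (f2 u) (liftPt ℂ (a₃ (g (s, u))))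
      + dt (nv x₂ w₂) (liftPt ℂ (a₃ (g (s, u)))) * dt (f2 u) (liftPt ℂ (a₁ s)) = 0 := by
    intro s hs u hu
    rw [hf2d, fv_br, fv_br, nv_br _ (hl₂ u (hTU u hu)), nv_br _ (hl₂ u (hTU u hu))]
    have hsym := href₂ (s, u) (hin s hs u hu)
    have hlaw := law_of_sym (hd₂ u (hTU u hu)).choose_spec hsym
    exact hlaw
  have l3 : ∀ s ∈ S, ∀ u ∈ T,
      dt (nv x₃ w₃) (liftPt ℂ (a₁ s)) * dt (f3 (g (s, u))) (liftPt ℂ (a₂ u))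
      + dt (nv x₃ w₃) (liftPt ℂ (a₂ u)) * dt (f3 (g (s, u))) (liftPt ℂ (a₁ s)) = 0 := by
    intro s hs u hu
    rw [hf3d, fv_br, fv_br, nv_br _ (hl₃ _ (hG s hs u hu)), nv_br _ (hl₃ _ (hG s hs u hu))]
    have hsym := href₃ (s, u) (hin s hs u hu)
    have hlaw := law_of_sym (hd₃ _ (hG s hs u hu)).choose_spec hsym
    exact hlaw
  obtain ⟨n1, hn1⟩ : ∃ n, n = nv x₁ w₁ := ⟨_, rfl⟩
  obtain ⟨n2, hn2⟩ : ∃ n, n = nv x₂ w₂ := ⟨_, rfl⟩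
  obtain ⟨n3, hn3⟩ : ∃ n, n = nv x₃ w₃ := ⟨_, rfl⟩
  simp only [← hn1, ← hn2, ← hn3] at hA hB hC hB1 hC1 hA2 hC2 hA3 hB3 l1 l2 l3
  have hD : dt n1 (cr n2 n3) ≠ 0 := by
    intro hD0
    exact conc_core (A := fun s => liftPt ℂ (a₁ s)) (B := fun s => liftPt ℂ (a₂ s))
      (C := fun s => liftPt ℂ (a₃ s)) hS hT hs0 hu0 g hD0 (fun s hs => hA s (hSU s hs))
      (fun s hs => hB s (hTU s hs)) (fun s hs u hu => hC _ (hG s hs u hu)) hA2 hA3 hB1 hB3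
      hC1 hC2 hf1 hf2 hf3 hfA hfB hfC hAi hBi hCi
      (fun n => analytic_dt (ha₁ s0 (hSU s0 hs0)) n)
      (fun n => analytic_dt (ha₂ u0 (hTU u0 hu0)) n) l1 l2 l3
  obtain ⟨r1, r2, r3, ri⟩ := tri_core (A := fun s => liftPt ℂ (a₁ s))
      (B := fun s => liftPt ℂ (a₂ s))
      (C := fun s => liftPt ℂ (a₃ s)) hS hT hs0 hu0 g hD (fun s hs => hA s (hSU s hs))
      (fun s hs => hB s (hTU s hs)) (fun s hs u hu => hC _ (hG s hs u hu)) hA2 hA3 hB1 hB3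
      hC1 hC2 hf1 hf2 hf3 hfA hfB hfC hAi hBi l1 l2 l3
  have hD2 : dt n2 (cr n3 n1) ≠ 0 := by rwa [dt_cyc]
  have hD3 : dt n3 (cr n1 n2) ≠ 0 := by rwa [dt_cyc]
  simp only [hf1d] at r1
  simp only [hf2d] at r2
  simp only [hf3d] at r3
  have R1 : Set.EqOn (fun s => dt (cr (liftPt ℂ (a₁ s)) (liftDir ℂ (v₁ s))) (cr n2 n3)) 0 U₁ :=
    AnalyticOnNhd.eqOn_zero_of_preconnected_of_eventuallyEq_zero
      (fun s hs => analytic_fv (ha₁ s hs) (hv₁ s hs) _) hU₁c.isPreconnected (hSU s0 hs0)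
      (Filter.eventually_of_mem (hS.mem_nhds hs0) r1)
  have R2 : Set.EqOn (fun s => dt (cr (liftPt ℂ (a₂ s)) (liftDir ℂ (v₂ s))) (cr n3 n1)) 0 U₂ :=
    AnalyticOnNhd.eqOn_zero_of_preconnected_of_eventuallyEq_zero
      (fun s hs => analytic_fv (ha₂ s hs) (hv₂ s hs) _) hU₂c.isPreconnected (hTU u0 hu0)
      (Filter.eventually_of_mem (hT.mem_nhds hu0) r2)
  have R3 : Set.EqOn (fun s => dt (cr (liftPt ℂ (a₃ s)) (liftDir ℂ (v₃ s))) (cr n1 n2)) 0 U₃ := by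
    apply AnalyticOnNhd.eqOn_zero_of_preconnected_of_frequently_eq_zero
      (fun s hs => analytic_fv (ha₃ s hs) (hv₃ s hs) _) hU₃c.isPreconnected (hG s0 hs0 u0 hu0)
    have hgc : ContinuousAt (fun s => g (s, u0)) s0 := by
      have h1 : ContinuousAt g (s0, u0) := hg.continuousAt (hΩo.mem_nhds hz0)
      exact ContinuousAt.comp (f := fun s : ℂ => (s, u0)) h1 (by fun_prop)
    have hev : ∀ᶠ s in nhdsWithin s0 {s0}ᶜ, s ∈ S :=
      (hS.eventually_mem hs0).filter_mono nhdsWithin_le_nhds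
    have hne : ∀ᶠ s in nhdsWithin s0 {s0}ᶜ, s ≠ s0 := self_mem_nhdsWithin
    have ht : Filter.Tendsto (fun s => g (s, u0)) (nhdsWithin s0 {s0}ᶜ)
        (nhdsWithin (g (s0, u0)) {g (s0, u0)}ᶜ) := by
      apply tendsto_nhdsWithin_of_tendsto_nhds_of_eventually_within
      · exact hgc.tendsto.mono_left nhdsWithin_le_nhds
      · filter_upwards [hev, hne] with s hs hs'
        exact fun h => hs' (ri s hs s0 hs0 u0 hu0 h)
    apply ht.frequently
    apply Filter.Eventually.frequently
    filter_upwards [hev] with s hs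
    exact r3 s hs u0 hu0
  refine ⟨cr n3 n1, cr n1 n2, cr n2 n3, ?_, ?_, ?_, ?_⟩
  · rw [Fintype.linearIndependent_iff]
    intro c hc
    simp only [Fin.sum_univ_three, Matrix.cons_val_zero, Matrix.cons_val_one,
      Matrix.cons_val_two, Matrix.head_cons, Matrix.tail_cons, Matrix.cons_val] at hc
    have k1 := congrArg (fun p => p.1) hc
    have k2 := congrArg (fun p => p.2.1) hc
    have k3 := congrArg (fun p => p.2.2) hc
    simp only [Prod.fst_add, Prod.snd_add, Prod.smul_fst, Prod.smul_snd, smul_eq_mul,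
      Prod.fst_zero, Prod.snd_zero] at k1 k2 k3
    have c0 : c 0 * dt n1 (cr n2 n3) = 0 := by
      simp only [dt, cr] at k1 k2 k3 ⊢
      linear_combination n2.1 * k1 + n2.2.1 * k2 + n2.2.2 * k3
    have c1 : c 1 * dt n1 (cr n2 n3) = 0 := by
      simp only [dt, cr] at k1 k2 k3 ⊢
      linear_combination n3.1 * k1 + n3.2.1 * k2 + n3.2.2 * k3
    have c2 : c 2 * dt n1 (cr n2 n3) = 0 := by
      simp only [dt, cr] at k1 k2 k3 ⊢
      linear_combination n1.1 * k1 + n1.2.1 * k2 + n1.2.2 * k3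
    have c0' := (mul_eq_zero.1 c0).resolve_right hD
    have c1' := (mul_eq_zero.1 c1).resolve_right hD
    have c2' := (mul_eq_zero.1 c2).resolve_right hD
    intro i
    fin_cases i
    · exact c0'
    · exact c1'
    · exact c2'
  · exact fun s hs => ⟨mem_span_edge hD (hA s hs), mem_span_of_dt (v0₁ s hs) (R1 hs)⟩
  · exact fun s hs => ⟨mem_span_edge hD2 (hB s hs), mem_span_of_dt (v0₂ s hs) (R2 hs)⟩
  · exact fun s hs => ⟨mem_span_edge hD3 (hC s hs), mem_span_of_dt (v0₃ s hs) (R3 hs)⟩
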